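/- arXiv:1601.06616 — 3 statements merged into one kernel-verified Lean document; each statement's English description precedes it below -/
import Mathlib

section
/- Let a ∈ ℝ² and let r : ℝ → ℝ² be twice differentiable with r''(t) = r(t) − a for all t ≥ 0. If a = r(0) + r'(0) (i.e., the ankle is placed at the instantaneous capture point), then r(t) = a − r'(0)·exp(−t) for all t ≥ 0; consequently r(t) → a, r'(t) → 0, and r''(t) → 0 as t → ∞, so the robot is captured. -/
/-! Along a pendulum trajectory the capture point `ξ = r + r'` obeys the unstable first-order
equation `(ξ - a)' = ξ - a`, so it rests at the ankle `a` if it starts there. Then `r' = a - r` at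
all later times, so the offset `r - a` obeys the stable equation `(r - a)' = -(r - a)`. -/

open Set Filter Topology

section LIPM

variable {E : Type*} [NormedAddCommGroup E] [NormedSpace ℝ E]

theorem eq_exp_smul_of_hasDerivWithinAt_smul {f : ℝ → E} {c t₀ : ℝ}
    (hf : ∀ t, t₀ ≤ t → HasDerivWithinAt f (c • f t) (Ici t₀) t) {t : ℝ} (ht : t₀ ≤ t) :
    f t = Real.exp (c * (t - t₀)) • f t₀ := by
  have hexp (s : ℝ) : HasDerivAt (fun s ↦ Real.exp (c * (s - t₀)) • f t₀)
      (c • Real.exp (c * (s - t₀)) • f t₀) s := by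
    have hlin : HasDerivAt (fun s ↦ c * (s - t₀)) c s := by
      simpa using ((hasDerivAt_id s).sub_const t₀).const_mul c
    simpa only [smul_smul, mul_comm c (Real.exp _)] using hlin.exp.smul_const (f t₀)
  exact ODE_solution_unique (v := fun _ x ↦ c • x) (fun _ ↦ lipschitzWith_smul c)
    (fun s hs ↦ (hf s hs.1).continuousWithinAt.mono Icc_subset_Ici_self)
    (fun s hs ↦ (hf s hs.1).mono (Ici_subset_Ici.2 hs.1))
    (fun s _ ↦ (hexp s).continuousAt.continuousWithinAt)
    (fun s _ ↦ (hexp s).hasDerivWithinAt) (by simp) (right_mem_Icc.2 ht)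

/-- The instantaneous capture point of the normalized linear inverted pendulum whose center of mass
has position `x` and velocity `v`. -/
def capturePoint {E : Type*} [Add E] (x v : E) : E := x + v

/-- `r` and `v` are the position and velocity, for times `t ≥ 0`, of the center of mass of a
normalized linear inverted pendulum with constant ankle location `a`: `r' = v` and `v' = r - a`.
Derivatives are taken within `[0, ∞)`, so that they are one-sided at the initial time. -/
structure IsLIPMTrajectory (a : E) (r v : ℝ → E) : Prop where
  hasDerivWithinAt_pos : ∀ t, 0 ≤ t → HasDerivWithinAt r (v t) (Ici 0) t
  hasDerivWithinAt_vel : ∀ t, 0 ≤ t → HasDerivWithinAt v (r t - a) (Ici 0) t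

namespace IsLIPMTrajectory

variable {a : E} {r v : ℝ → E} {t : ℝ}

theorem capturePoint_sub_ankle (h : IsLIPMTrajectory a r v) (ht : 0 ≤ t) :
    capturePoint (r t) (v t) - a = Real.exp t • (capturePoint (r 0) (v 0) - a) := by
  have hderiv (s : ℝ) (hs : 0 ≤ s) : HasDerivWithinAt (fun s ↦ capturePoint (r s) (v s) - a)
      ((1 : ℝ) • (capturePoint (r s) (v s) - a)) (Ici 0) s := by
    refine (((h.hasDerivWithinAt_pos s hs).add (h.hasDerivWithinAt_vel s hs)).sub_const
      a).congr_deriv ?_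
    rw [one_smul, capturePoint]
    abel
  simpa using eq_exp_smul_of_hasDerivWithinAt_smul hderiv ht

theorem capturePoint_eq_ankle (h : IsLIPMTrajectory a r v) (hcap : a = capturePoint (r 0) (v 0))
    (ht : 0 ≤ t) : capturePoint (r t) (v t) = a := by
  rw [← sub_eq_zero, h.capturePoint_sub_ankle ht, ← hcap, sub_self, smul_zero]

theorem vel_eq_ankle_sub_pos (h : IsLIPMTrajectory a r v) (hcap : a = capturePoint (r 0) (v 0))
    (ht : 0 ≤ t) : v t = a - r t :=
  eq_sub_of_add_eq' (h.capturePoint_eq_ankle hcap ht)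

theorem pos_eq (h : IsLIPMTrajectory a r v) (hcap : a = capturePoint (r 0) (v 0)) (ht : 0 ≤ t) :
    r t = a - Real.exp (-t) • v 0 := by
  have hderiv (s : ℝ) (hs : 0 ≤ s) :
      HasDerivWithinAt (fun s ↦ r s - a) ((-1 : ℝ) • (r s - a)) (Ici 0) s := by
    refine ((h.hasDerivWithinAt_pos s hs).sub_const a).congr_deriv ?_
    rw [h.vel_eq_ankle_sub_pos hcap hs, neg_one_smul, neg_sub]
  have hoffset : r t - a = Real.exp (-t) • (r 0 - a) := by
    simpa using eq_exp_smul_of_hasDerivWithinAt_smul hderiv ht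
  rw [h.vel_eq_ankle_sub_pos hcap le_rfl, ← neg_sub (r 0) a, smul_neg, ← hoffset]
  abel

theorem tendsto_pos (h : IsLIPMTrajectory a r v) (hcap : a = capturePoint (r 0) (v 0)) :
    Tendsto r atTop (𝓝 a) := by
  have hlim : Tendsto (fun t ↦ a - Real.exp (-t) • v 0) atTop (𝓝 a) := by
    simpa using (Real.tendsto_exp_neg_atTop_nhds_zero.smul_const (v 0)).const_sub a
  refine hlim.congr' ?_
  filter_upwards [eventually_ge_atTop 0] with t ht using (h.pos_eq hcap ht).symm

theorem tendsto_vel (h : IsLIPMTrajectory a r v) (hcap : a = capturePoint (r 0) (v 0)) :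
    Tendsto v atTop (𝓝 0) := by
  have hlim : Tendsto (fun t ↦ a - r t) atTop (𝓝 0) := by
    simpa using (h.tendsto_pos hcap).const_sub a
  refine hlim.congr' ?_
  filter_upwards [eventually_ge_atTop 0] with t ht using (h.vel_eq_ankle_sub_pos hcap ht).symm

end IsLIPMTrajectory

theorem stmt2_general {a : E} {r v w : ℝ → E}
    (hr : ∀ t, 0 ≤ t → HasDerivWithinAt r (v t) (Ici 0) t)
    (hv : ∀ t, 0 ≤ t → HasDerivWithinAt v (w t) (Ici 0) t)
    (hode : ∀ t, 0 ≤ t → w t = r t - a) (hcap : a = capturePoint (r 0) (v 0)) :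
    (∀ t, 0 ≤ t → r t = a - Real.exp (-t) • v 0) ∧
    Tendsto r atTop (𝓝 a) ∧ Tendsto v atTop (𝓝 0) ∧ Tendsto w atTop (𝓝 0) := by
  have h : IsLIPMTrajectory a r v := ⟨hr, fun t ht ↦ hode t ht ▸ hv t ht⟩
  refine ⟨fun t ht ↦ h.pos_eq hcap ht, h.tendsto_pos hcap, h.tendsto_vel hcap, ?_⟩
  have hlim : Tendsto (fun t ↦ r t - a) atTop (𝓝 0) :=
    tendsto_sub_nhds_zero_iff.2 (h.tendsto_pos hcap)
  refine hlim.congr' ?_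
  filter_upwards [eventually_ge_atTop 0] with t ht using (hode t ht).symm

end LIPM

/-- If the ankle is placed at the instantaneous capture point
(`a = r 0 + r' 0`), then under the LIPM dynamics `r'' = r - a` on `t ≥ 0`,
`r t = a - exp (-t) • r' 0`; consequently `r → a`, `r' → 0`, `r'' → 0`
as `t → ∞`: the robot is captured. -/
theorem stmt2 (a : EuclideanSpace ℝ (Fin 2)) (r : ℝ → EuclideanSpace ℝ (Fin 2))
    (hr : Differentiable ℝ r) (hr' : Differentiable ℝ (deriv r))
    (hode : ∀ t, 0 ≤ t → deriv (deriv r) t = r t - a)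
    (hcap : a = r 0 + deriv r 0) :
    (∀ t, 0 ≤ t → r t = a - Real.exp (-t) • deriv r 0) ∧
    Filter.Tendsto r Filter.atTop (nhds a) ∧
    Filter.Tendsto (deriv r) Filter.atTop (nhds 0) ∧
    Filter.Tendsto (deriv (deriv r)) Filter.atTop (nhds 0) :=
  stmt2_general (fun t _ ↦ (hr t).hasDerivAt.hasDerivWithinAt)
    (fun t _ ↦ (hr' t).hasDerivAt.hasDerivWithinAt) hode hcap
end

section
/- Let a ∈ ℝ² and let r : ℝ → ℝ² be twice differentiable with r''(t) = r(t) − a for all t ≥ 0. Then r is bounded on [0, ∞) if and only if a = r(0) + r'(0). Hence the instantaneous capture point r(0) + r'(0) is the unique one-step capture point for the LIPM with point foot: it is the unique ankle placement under which the resulting motion does not diverge. -/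
/-! In the coordinates `r + r'` (the capture point) and `r - r'` the dynamics `r'' = r - a`
decouple: relative to `a`, the first grows like `exp t` and the second decays like `exp (-t)`.
Hence `r` is bounded exactly when the growing mode `r 0 + r' 0 - a` vanishes. -/

open Filter Real Set Topology

section

variable {E : Type*} [NormedAddCommGroup E] [NormedSpace ℝ E]

theorem eq_exp_mul_smul_of_hasDerivWithinAt {k : ℝ} {f : ℝ → E}
    (hf : ∀ t, 0 ≤ t → HasDerivWithinAt f (k • f t) (Ici 0) t) {t : ℝ} (ht : 0 ≤ t) :
    f t = exp (k * t) • f 0 := by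
  have hderiv : ∀ s, 0 ≤ s → HasDerivWithinAt (fun s ↦ exp (-(k * s)) • f s) 0 (Ici 0) s := by
    intro s hs
    have hexp : HasDerivAt (fun s ↦ exp (-(k * s))) (exp (-(k * s)) * -k) s := by
      simpa using ((hasDerivAt_id s).const_mul k).neg.exp
    refine (hexp.hasDerivWithinAt.smul (hf s hs)).congr_deriv ?_
    module
  have hconst : exp (-(k * t)) • f t = f 0 := by
    simpa using constant_of_has_deriv_right_zero
      (fun s hs ↦ (hderiv s hs.1).continuousWithinAt.mono Icc_subset_Ici_self)
      (fun s hs ↦ (hderiv s hs.1).mono (Ici_subset_Ici.2 hs.1)) t (right_mem_Icc.2 ht)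
  rw [← hconst, smul_smul, ← exp_add, add_neg_cancel, exp_zero, one_smul]

theorem tendsto_exp_neg_smul_of_norm_le {C : ℝ} {f : ℝ → E} (hf : ∀ t, 0 ≤ t → ‖f t‖ ≤ C) :
    Tendsto (fun t ↦ exp (-t) • f t) atTop (𝓝 0) :=
  tendsto_exp_neg_atTop_nhds_zero.zero_smul_isBoundedUnder_le
    (isBoundedUnder_of_eventually_le ((eventually_ge_atTop 0).mono hf))

theorem norm_exp_neg_smul_le {t : ℝ} (ht : 0 ≤ t) (w : E) : ‖exp (-t) • w‖ ≤ ‖w‖ := by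
  rw [norm_smul, norm_of_nonneg (exp_nonneg _)]
  exact mul_le_of_le_one_left (norm_nonneg w) (exp_le_one_iff.2 (neg_nonpos.2 ht))

theorem exists_norm_add_exp_smul_add_exp_neg_smul_le_iff (c u w : E) :
    (∃ C : ℝ, ∀ t, 0 ≤ t → ‖c + exp t • u + exp (-t) • w‖ ≤ C) ↔ u = 0 := by
  constructor
  · rintro ⟨C, hC⟩
    have hbounded : ∀ t, 0 ≤ t → ‖c + exp (-t) • w‖ ≤ ‖c‖ + ‖w‖ := fun t ht ↦
      norm_add_le_of_le le_rfl (norm_exp_neg_smul_le ht w)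
    have hlim : Tendsto (fun t ↦ u + exp (-t) • (c + exp (-t) • w)) atTop (𝓝 u) := by
      simpa only [add_zero] using (tendsto_exp_neg_smul_of_norm_le hbounded).const_add u
    have hrescale : ∀ t, exp (-t) • (c + exp t • u + exp (-t) • w) =
        u + exp (-t) • (c + exp (-t) • w) := by
      intro t
      have hcancel : exp (-t) • exp t • u = u := by
        rw [smul_smul, ← exp_add, neg_add_cancel, exp_zero, one_smul]
      simp only [smul_add, hcancel]
      abel
    exact tendsto_nhds_unique hlim ((tendsto_exp_neg_smul_of_norm_le hC).congr hrescale)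
  · rintro rfl
    refine ⟨‖c‖ + ‖w‖, fun t ht ↦ ?_⟩
    rw [smul_zero, add_zero]
    exact norm_add_le_of_le le_rfl (norm_exp_neg_smul_le ht w)

/-- A trajectory of the normalized linear inverted pendulum on `[0, ∞)` with ankle `a`, center of
mass `r` and velocity `v`. Derivatives are taken within `[0, ∞)`, so they are one-sided at `0`. -/
structure IsLIPMTrajectory_s6 (a : E) (r v : ℝ → E) : Prop where
  hasDerivWithinAt_position : ∀ t, 0 ≤ t → HasDerivWithinAt r (v t) (Ici 0) t
  hasDerivWithinAt_velocity : ∀ t, 0 ≤ t → HasDerivWithinAt v (r t - a) (Ici 0) t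

namespace IsLIPMTrajectory_s6

variable {a : E} {r v : ℝ → E}

theorem position_add_velocity_sub_ankle (h : IsLIPMTrajectory_s6 a r v) {t : ℝ} (ht : 0 ≤ t) :
    r t + v t - a = exp t • (r 0 + v 0 - a) := by
  simpa only [one_mul] using eq_exp_mul_smul_of_hasDerivWithinAt (k := 1)
    (f := fun s ↦ r s + v s - a) (fun s hs ↦
      (((h.hasDerivWithinAt_position s hs).add
        (h.hasDerivWithinAt_velocity s hs)).sub_const a).congr_deriv (by module)) ht

theorem position_sub_velocity_sub_ankle (h : IsLIPMTrajectory_s6 a r v) {t : ℝ} (ht : 0 ≤ t) :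
    r t - v t - a = exp (-t) • (r 0 - v 0 - a) := by
  simpa only [neg_one_mul] using eq_exp_mul_smul_of_hasDerivWithinAt (k := -1)
    (f := fun s ↦ r s - v s - a) (fun s hs ↦
      (((h.hasDerivWithinAt_position s hs).sub
        (h.hasDerivWithinAt_velocity s hs)).sub_const a).congr_deriv (by module)) ht

theorem position_eq (h : IsLIPMTrajectory_s6 a r v) {t : ℝ} (ht : 0 ≤ t) :
    r t = a + exp t • (2⁻¹ : ℝ) • (r 0 + v 0 - a) + exp (-t) • (2⁻¹ : ℝ) • (r 0 - v 0 - a) := by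
  rw [smul_comm (exp t), smul_comm (exp (-t)), ← h.position_add_velocity_sub_ankle ht,
    ← h.position_sub_velocity_sub_ankle ht]
  module

end IsLIPMTrajectory_s6

theorem stmt6_general {a : E} {r v : ℝ → E} (h : IsLIPMTrajectory_s6 a r v) :
    (∃ C : ℝ, ∀ t, 0 ≤ t → ‖r t‖ ≤ C) ↔ a = r 0 + v 0 :=
  calc (∃ C : ℝ, ∀ t, 0 ≤ t → ‖r t‖ ≤ C)
      ↔ ∃ C : ℝ, ∀ t, 0 ≤ t → ‖a + exp t • (2⁻¹ : ℝ) • (r 0 + v 0 - a) +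
          exp (-t) • (2⁻¹ : ℝ) • (r 0 - v 0 - a)‖ ≤ C :=
        exists_congr fun C ↦ forall₂_congr fun t ht ↦ by rw [← h.position_eq ht]
    _ ↔ (2⁻¹ : ℝ) • (r 0 + v 0 - a) = 0 :=
        exists_norm_add_exp_smul_add_exp_neg_smul_le_iff _ _ _
    _ ↔ a = r 0 + v 0 := by
        rw [smul_eq_zero_iff_right (by norm_num), sub_eq_zero, eq_comm]

end

/-- For LIPM dynamics `r'' = r - a` on `t ≥ 0`, the trajectory is bounded
on `[0, ∞)` if and only if the ankle `a` equals the instantaneous capture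
point `r 0 + r' 0`: the instantaneous capture point is the unique one-step
capture point of the LIPM with point foot. -/
theorem stmt6 (a : EuclideanSpace ℝ (Fin 2)) (r : ℝ → EuclideanSpace ℝ (Fin 2))
    (hr : Differentiable ℝ r) (hr' : Differentiable ℝ (deriv r))
    (hode : ∀ t, 0 ≤ t → deriv (deriv r) t = r t - a) :
    (∃ C : ℝ, ∀ t, 0 ≤ t → ‖r t‖ ≤ C) ↔ a = r 0 + deriv r 0 :=
  stmt6_general ⟨fun t _ ↦ (hr t).hasDerivAt.hasDerivWithinAt,
    fun t ht ↦ hode t ht ▸ (hr' t).hasDerivAt.hasDerivWithinAt⟩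
end

section
/- Let f : ℝ → ℝ, d ∈ ℝ, N ≥ 1, and τ₁, …, τ_N ∈ ℝ. Define alternating foot positions a₀ = a₁ = 0 and a_{i+1} = a_{i−1} + f(τ_i) for 1 ≤ i ≤ N, and capture point values x₀ = d and x_i = (x_{i−1} − a_i)·exp(τ_i) + a_i for 1 ≤ i ≤ N. Then the N-step capture condition x_N = a_{N+1} holds if and only if d = Σ_{i=1}^{N} exp(−Σ_{j=1}^{i} τ_j) · Σ_{j=1}^{i} (−1)^{i+j} f(τ_j). -/
/-!
The rear foot steps over the stance foot, so each new offset `a (i + 1) - a i` is the step length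
minus the previous offset; offsets are therefore alternating sums of step lengths. Meanwhile the gap
`x i - a (i + 1)` between the capture point and the next ankle, discounted by the growth accumulated
so far, drops at step `i` by exactly the discounted offset `a (i + 1) - a i`. Hence the discounted
final gap is the initial gap `x 0 - a 1` minus the sum of the discounted offsets, and capture means
that the final gap vanishes.
-/

theorem sum_Icc_succ_neg_one_pow_add_mul {R : Type*} [Ring R] (c : ℕ → R) (n : ℕ) :
    ∑ j ∈ Finset.Icc 1 (n + 1), (-1) ^ (n + 1 + j) * c j =
      c (n + 1) - ∑ j ∈ Finset.Icc 1 n, (-1) ^ (n + j) * c j := by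
  have sign_flip (j : ℕ) : (-1 : R) ^ (n + 1 + j) * c j = -((-1) ^ (n + j) * c j) := by
    rw [add_right_comm, pow_succ', neg_one_mul, neg_mul]
  rw [Finset.sum_Icc_succ_top (Nat.le_add_left 1 n), Even.neg_one_pow (Even.add_self _), one_mul,
    Finset.sum_congr rfl fun j _ ↦ sign_flip j, Finset.sum_neg_distrib, neg_add_eq_sub]

theorem sub_eq_sum_neg_one_pow_of_alternating {R : Type*} [Ring R] {a c : ℕ → R} {n : ℕ}
    (ha : ∀ i < n, a (i + 2) = a i + c (i + 1)) :
    a (n + 1) - a n =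
      ∑ j ∈ Finset.Icc 1 n, (-1) ^ (n + j) * c j + (-1) ^ n * (a 1 - a 0) := by
  induction n with
  | zero => simp
  | succ n ih =>
    have offset : a (n + 2) - a (n + 1) = c (n + 1) - (a (n + 1) - a n) := by
      rw [ha n n.lt_succ_self]
      abel
    rw [offset, ih fun i hi ↦ ha i (hi.trans n.lt_succ_self), sum_Icc_succ_neg_one_pow_add_mul,
      pow_succ', neg_one_mul, neg_mul]
    abel

section AffineRecursion

variable {K : Type*} [Field K] {r a x : ℕ → K} {n : ℕ}

theorem inv_prod_mul_sub_eq_sub_sum_inv_prod_mul (hr : ∀ i < n, r (i + 1) ≠ 0)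
    (hx : ∀ i < n, x (i + 1) = (x i - a (i + 1)) * r (i + 1) + a (i + 1)) :
    (∏ j ∈ Finset.Icc 1 n, r j)⁻¹ * (x n - a (n + 1)) =
      x 0 - a 1 -
        ∑ i ∈ Finset.Icc 1 n, (∏ j ∈ Finset.Icc 1 i, r j)⁻¹ * (a (i + 1) - a i) := by
  induction n with
  | zero => simp
  | succ n ih =>
    have discount : (∏ j ∈ Finset.Icc 1 (n + 1), r j)⁻¹ * r (n + 1) =
        (∏ j ∈ Finset.Icc 1 n, r j)⁻¹ := by
      rw [Finset.prod_Icc_succ_top (Nat.le_add_left 1 n), mul_inv,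
        inv_mul_cancel_right₀ (hr n n.lt_succ_self)]
    rw [Finset.sum_Icc_succ_top (Nat.le_add_left 1 n), ← sub_sub,
      ← ih (fun i hi ↦ hr i (hi.trans n.lt_succ_self)) fun i hi ↦ hx i (hi.trans n.lt_succ_self),
      ← discount, hx n n.lt_succ_self]
    ring

theorem eq_succ_iff_sub_eq_sum_inv_prod_mul (hr : ∀ i < n, r (i + 1) ≠ 0)
    (hx : ∀ i < n, x (i + 1) = (x i - a (i + 1)) * r (i + 1) + a (i + 1)) :
    x n = a (n + 1) ↔
      x 0 - a 1 =
        ∑ i ∈ Finset.Icc 1 n, (∏ j ∈ Finset.Icc 1 i, r j)⁻¹ * (a (i + 1) - a i) := by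
  have growth_ne_zero : ∏ j ∈ Finset.Icc 1 n, r j ≠ 0 :=
    Finset.prod_ne_zero_iff.mpr fun j hj ↦ by
      obtain ⟨one_le, le_n⟩ := Finset.mem_Icc.mp hj
      simpa [Nat.sub_add_cancel one_le] using hr (j - 1) (by lia)
  rw [← sub_eq_zero, ← mul_eq_zero_iff_left (inv_ne_zero growth_ne_zero),
    inv_prod_mul_sub_eq_sub_sum_inv_prod_mul hr hx, sub_eq_zero]

theorem stmt11_general {c : ℕ → K} (hr : ∀ i < n, r (i + 1) ≠ 0)
    (ha : ∀ i < n, a (i + 2) = a i + c (i + 1))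
    (hx : ∀ i < n, x (i + 1) = (x i - a (i + 1)) * r (i + 1) + a (i + 1)) :
    x n = a (n + 1) ↔
      x 0 - a 1 = ∑ i ∈ Finset.Icc 1 n, (∏ j ∈ Finset.Icc 1 i, r j)⁻¹ *
        (∑ j ∈ Finset.Icc 1 i, (-1) ^ (i + j) * c j + (-1) ^ i * (a 1 - a 0)) := by
  have offset : ∀ i ∈ Finset.Icc 1 n, a (i + 1) - a i =
      ∑ j ∈ Finset.Icc 1 i, (-1) ^ (i + j) * c j + (-1) ^ i * (a 1 - a 0) := fun i hi ↦
    sub_eq_sum_neg_one_pow_of_alternating fun k hk ↦ ha k (hk.trans_le (Finset.mem_Icc.mp hi).2)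
  rw [eq_succ_iff_sub_eq_sum_inv_prod_mul hr hx,
    Finset.sum_congr rfl fun i hi ↦ congrArg _ (offset i hi)]

end AffineRecursion

/-- N-step capture condition for the 1D normalized LIPM with swing leg
kernel `f`. Alternating foot positions: `a 0 = a 1 = 0`,
`a (i+1) = a (i-1) + f (τ i)` for `1 ≤ i ≤ N`; capture point values:
`x 0 = d`, `x i = (x (i-1) - a i) * exp (τ i) + a i` for `1 ≤ i ≤ N`.
Then the capture condition `x N = a (N+1)` holds iff
`d = ∑_{i=1}^N exp (-∑_{j=1}^i τ j) * ∑_{j=1}^i (-1)^(i+j) * f (τ j)`. -/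
theorem stmt11 (f : ℝ → ℝ) (d : ℝ) (N : ℕ) (hN : 1 ≤ N) (τ : ℕ → ℝ)
    (a x : ℕ → ℝ) (ha0 : a 0 = 0) (ha1 : a 1 = 0)
    (harec : ∀ i, 1 ≤ i → i ≤ N → a (i + 1) = a (i - 1) + f (τ i))
    (hx0 : x 0 = d)
    (hxrec : ∀ i, 1 ≤ i → i ≤ N → x i = (x (i - 1) - a i) * Real.exp (τ i) + a i) :
    x N = a (N + 1) ↔
      d = ∑ i ∈ Finset.Icc 1 N, Real.exp (-(∑ j ∈ Finset.Icc 1 i, τ j)) *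
            ∑ j ∈ Finset.Icc 1 i, (-1 : ℝ) ^ (i + j) * f (τ j) := by
  simpa [hx0, ha0, ha1, Real.exp_neg, Real.exp_sum] using
    stmt11_general (a := a) (x := x) (c := fun i ↦ f (τ i)) (r := fun i ↦ Real.exp (τ i))
      (fun i _ ↦ Real.exp_ne_zero (τ (i + 1)))
      (fun i hi ↦ harec (i + 1) (by lia) hi) (fun i hi ↦ hxrec (i + 1) (by lia) hi)
end
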